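/- arXiv:1507.02853 — 3 statements merged into one kernel-verified Lean document; each statement's English description precedes it below -/
import Mathlib

section
/- Let p be a prime, let x : ZMod p with x ≠ 0, let s : List (ZMod p), and let i ≤ j ≤ s.length. Then the fingerprint of the substring s[i..j) satisfies φ_x((s.take j).drop i) = (x⁻¹)^i * (φ_x(s.take j) − φ_x(s.take i)). -/
/-!
The prefix of length `j` is the prefix of length `i` followed by the substring `s[i..j)`, so the
concatenation law `karpRabin_append` expresses the difference of the two prefix fingerprints as
`x ^ i` times the fingerprint of the substring; `x ^ i` is then cancelled in the field `ZMod p`.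
-/

/-- The Karp–Rabin fingerprint of a list `s` over `ZMod p` at evaluation point `x`:
`φ_x(s) = ∑_{k < s.length} s[k] * x^k`. -/
def karpRabin {p : ℕ} (x : ZMod p) (s : List (ZMod p)) : ZMod p :=
  ∑ k ∈ Finset.range s.length, s.getD k 0 * x ^ k

/-- Concatenation law: the fingerprint of `a ++ b` is that of `a` plus that of `b` shifted by
`x ^ a.length`. -/
lemma karpRabin_append {p : ℕ} (x : ZMod p) (a b : List (ZMod p)) :
    karpRabin x (a ++ b) = karpRabin x a + x ^ a.length * karpRabin x b := by
  unfold karpRabin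
  rw [List.length_append, Finset.sum_range_add, Finset.mul_sum]
  congr 1
  · refine Finset.sum_congr rfl fun k hk => ?_
    rw [List.getD_append _ _ _ _ (Finset.mem_range.mp hk)]
  · refine Finset.sum_congr rfl fun k _ => ?_
    rw [List.getD_append_right _ _ _ _ (Nat.le_add_right _ _), Nat.add_sub_cancel_left]
    ring

theorem karpRabin_infix (p : ℕ) (hp : p.Prime) (x : ZMod p) (hx : x ≠ 0)
    (s : List (ZMod p)) (i j : ℕ) (hij : i ≤ j) (hj : j ≤ s.length) :
    karpRabin x ((s.take j).drop i) =
      (x⁻¹) ^ i * (karpRabin x (s.take j) - karpRabin x (s.take i)) := by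
  have : Fact p.Prime := ⟨hp⟩
  have split : s.take j = s.take i ++ (s.take j).drop i := by
    conv_lhs => rw [← List.take_append_drop i (s.take j)]
    rw [List.take_take, min_eq_left hij]
  have key := karpRabin_append x (s.take i) ((s.take j).drop i)
  rw [← split, List.length_take, min_eq_left (hij.trans hj)] at key
  rw [key, add_sub_cancel_left, ← mul_assoc, ← mul_pow, inv_mul_cancel₀ hx, one_pow, one_mul]
end

section
/- Let p be a prime and let s, t : List (ZMod p) be two lists with s.length = t.length and s ≠ t. Then the number of elements x : ZMod p for which φ_x(s) = φ_x(t) is at most s.length − 1; that is, (Finset.univ.filter (fun x : ZMod p => φ_x(s) = φ_x(t))).card ≤ s.length − 1. -/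
open Classical in
theorem karpRabin_collisions_le (p : ℕ) [Fact p.Prime] (s t : List (ZMod p))
    (hlen : s.length = t.length) (hne : s ≠ t) :
    (Finset.univ.filter (fun x : ZMod p => karpRabin x s = karpRabin x t)).card ≤
      s.length - 1 := by
  set P : Polynomial (ZMod p) := ∑ k ∈ Finset.range s.length,
    Polynomial.monomial k (s.getD k 0 - t.getD k 0) with hP
  have hcoeff : ∀ k < s.length, P.coeff k = s.getD k 0 - t.getD k 0 := by
    intro k hk
    simp only [hP, Polynomial.finsetSum_coeff, Polynomial.coeff_monomial]
    rw [Finset.sum_ite_eq' (Finset.range s.length) k, if_pos (Finset.mem_range.mpr hk)]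
  have hP0 : P ≠ 0 := by
    intro h0
    refine hne (List.ext_getElem hlen fun k hs ht => ?_)
    have h := hcoeff k hs
    rw [h0, Polynomial.coeff_zero, List.getD_eq_getElem _ _ hs,
      List.getD_eq_getElem _ _ ht] at h
    exact sub_eq_zero.mp h.symm
  have hdeg : P.natDegree ≤ s.length - 1 := by
    refine Polynomial.natDegree_sum_le_of_forall_le _ _ fun k hk => ?_
    have hk' := Finset.mem_range.mp hk
    exact (Polynomial.natDegree_monomial_le _).trans (by omega)
  have heval : ∀ x, P.eval x = karpRabin x s - karpRabin x t := by
    intro x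
    simp only [hP, karpRabin, ← hlen, Polynomial.eval_finsetSum, Polynomial.eval_monomial,
      sub_mul, Finset.sum_sub_distrib]
  calc (Finset.univ.filter (fun x : ZMod p => karpRabin x s = karpRabin x t)).card
      ≤ P.roots.toFinset.card := Finset.card_le_card fun x hx => by
        rw [Multiset.mem_toFinset, Polynomial.mem_roots hP0, Polynomial.IsRoot, heval,
          (Finset.mem_filter.mp hx).2, sub_self]
    _ ≤ Multiset.card P.roots := Multiset.toFinset_card_le _
    _ ≤ P.natDegree := P.card_roots'
    _ ≤ s.length - 1 := hdeg
end

section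
/- Let N, a, b be real numbers with 2 ≤ a ≤ N and 2 ≤ b ≤ N. If ⌊Real.logb 2 (Real.logb 2 N) − Real.logb 2 (Real.logb 2 a)⌋ = ⌊Real.logb 2 (Real.logb 2 N) − Real.logb 2 (Real.logb 2 b)⌋, then Real.sqrt b ≤ a. -/
/-!
Two reals with the same floor differ by less than `1`, so equality of levels gives
`log₂ log₂ b < 1 + log₂ log₂ a = log₂ (2 log₂ a) = log₂ log₂ a²`. Since `log₂` is strictly
increasing on the positive reals, removing both logarithms yields `b < a²`.
-/

theorem same_level_sqrt (N a b : ℝ) (h2a : 2 ≤ a) (haN : a ≤ N) (h2b : 2 ≤ b) (hbN : b ≤ N)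
    (hlevel : ⌊Real.logb 2 (Real.logb 2 N) - Real.logb 2 (Real.logb 2 a)⌋ =
      ⌊Real.logb 2 (Real.logb 2 N) - Real.logb 2 (Real.logb 2 b)⌋) :
    Real.sqrt b ≤ a := by
  have hclose := (abs_lt.mp (Int.abs_sub_lt_one_of_floor_eq_floor hlevel)).2
  have hla : 0 < Real.logb 2 a := Real.logb_pos one_lt_two (by linarith)
  have hlb : 0 < Real.logb 2 b := Real.logb_pos one_lt_two (by linarith)
  have hsq : Real.logb 2 (a ^ 2) = 2 * Real.logb 2 a := by
    rw [Real.logb_pow]; norm_num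
  have hloglog : Real.logb 2 (Real.logb 2 (a ^ 2)) = 1 + Real.logb 2 (Real.logb 2 a) := by
    rw [hsq, Real.logb_mul two_ne_zero hla.ne', Real.logb_self_eq_one one_lt_two]
  have h1 : Real.logb 2 (Real.logb 2 b) < Real.logb 2 (Real.logb 2 (a ^ 2)) := by
    linarith
  have h2 : Real.logb 2 b < Real.logb 2 (a ^ 2) :=
    (Real.logb_lt_logb_iff one_lt_two hlb (by rw [hsq]; positivity)).mp h1
  have h3 : b < a ^ 2 :=
    (Real.logb_lt_logb_iff one_lt_two (by linarith) (by positivity)).mp h2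
  exact Real.sqrt_le_iff.mpr ⟨by linarith, h3.le⟩
end
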